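/- For every uniformly continuous probability density ρ supported in the compact set W and every ε > 0, there exists a mixture density ρ_ε ∈ P_φ such that ‖ρ_ε − ρ‖_{L²(ℝ^d)} < ε. -/

import Mathlib

open MeasureTheory

/-- A density from the mixture class `P_φ`:
`ρ(w) = Σ_{i=1}^n α_i φ_{σ_i}(w − μ_i)` with `n ∈ ℕ+`, `μ_i ∈ ℝ^d`, `σ_i ∈ (0,1]` and
`α` in the probability simplex `Λ_n`. -/
def IsMixtureDensity {d : ℕ} (φ : EuclideanSpace ℝ (Fin d) → ℝ)
    (ρ : EuclideanSpace ℝ (Fin d) → ℝ) : Prop :=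
  ∃ n : ℕ, 0 < n ∧
    ∃ (α : Fin n → ℝ) (c : Fin n → EuclideanSpace ℝ (Fin d)) (σ : Fin n → ℝ),
      (∀ i, 0 ≤ α i) ∧ (∑ i, α i) = 1 ∧ (∀ i, 0 < σ i ∧ σ i ≤ 1) ∧
      ∀ w, ρ w = ∑ i, α i * ((σ i ^ d)⁻¹ * φ ((σ i)⁻¹ • (w - c i)))

/-!
In `Lᵖ`, `1 ≤ p < ∞`, the convolution `φ_σ ⋆ ρ` is the Bochner integral `∫ ρ(y) τ_y φ_σ dy` of the
translates `τ_y φ_σ`. As `ρ` is a probability density, this is an average of mixtures, hence lies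
in the closure of the mixture class, which is convex. On the other hand
`φ_σ ⋆ ρ = ρ ⋆ φ_σ = ∫ φ_σ(u) τ_u ρ du = ∫ φ(x) τ_{σx} ρ dx`, which tends to `ρ` as `σ → 0` by
continuity of translations in `Lᵖ` and dominated convergence.
-/

open Filter Topology Module
open scoped ENNReal Convolution

section BochnerLemmas

variable {α : Type*} {mα : MeasurableSpace α} {μ : Measure α}

theorem integral_smul_mem_of_convex {X : Type*} [NormedAddCommGroup X] [NormedSpace ℝ X]
    [CompleteSpace X] {s : Set X} (hs : Convex ℝ s) (hsc : IsClosed s) {w : α → ℝ}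
    (hw_nonneg : 0 ≤ᵐ[μ] w) (hw_int : ∫ x, w x ∂μ = 1) {v : α → X} (hv : ∀ x, v x ∈ s)
    (hwv : Integrable (fun x ↦ w x • v x) μ) : ∫ x, w x • v x ∂μ ∈ s := by
  have hw : Integrable w μ := integrable_of_integral_eq_one hw_int
  have hw_meas : AEMeasurable (fun x ↦ ENNReal.ofReal (w x)) μ := hw.aemeasurable.ennreal_ofReal
  have hw_top : ∀ᵐ x ∂μ, ENNReal.ofReal (w x) < ∞ := ae_of_all _ fun _ ↦ ENNReal.ofReal_lt_top
  have hsmul : (fun x ↦ (ENNReal.ofReal (w x)).toReal • v x) =ᵐ[μ] fun x ↦ w x • v x := by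
    filter_upwards [hw_nonneg] with x hx
    rw [ENNReal.toReal_ofReal hx]
  have hprob : IsProbabilityMeasure (μ.withDensity fun x ↦ ENNReal.ofReal (w x)) := by
    refine ⟨?_⟩
    rw [withDensity_apply _ .univ, setLIntegral_univ,
      ← ofReal_integral_eq_lintegral_ofReal hw hw_nonneg, hw_int, ENNReal.ofReal_one]
  rw [← integral_congr_ae hsmul, ← integral_withDensity_eq_integral_toReal_smul₀ hw_meas hw_top]
  refine hs.integral_mem hsc (ae_of_all _ hv) ?_
  rwa [integrable_withDensity_iff_integrable_smul₀' hw_meas hw_top, integrable_congr hsmul]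

theorem setIntegral_integral_Lp {β F : Type*} {mβ : MeasurableSpace β} {ν : Measure β}
    [NormedAddCommGroup F] [NormedSpace ℝ F] [CompleteSpace F] {p : ℝ≥0∞} [Fact (1 ≤ p)]
    {v : α → Lp F p ν} (hv : Integrable v μ) {s : Set β} (hs : MeasurableSet s) (hνs : ν s ≠ ∞) :
    ∫ x in s, (∫ y, v y ∂μ : Lp F p ν) x ∂ν = ∫ y, ∫ x in s, v y x ∂ν ∂μ := by
  have : Fact (1 ≤ p.conjExponent) := ⟨ENNReal.HolderConjugate.one_le p.conjExponent p⟩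
  let L : Lp F p ν →L[ℝ] F := (ContinuousLinearMap.lsmul ℝ ℝ).lpPairing ν p.conjExponent p
    (indicatorConstLp p.conjExponent hs hνs (1 : ℝ))
  have hL : ∀ f : Lp F p ν, L f = ∫ x in s, f x ∂ν := fun f ↦ by
    rw [ContinuousLinearMap.lpPairing_eq_integral, ← integral_indicator hs]
    refine integral_congr_ae ?_
    filter_upwards [indicatorConstLp_coeFn (p := p.conjExponent) (hs := hs) (hμs := hνs)
      (c := (1 : ℝ))] with x hx
    by_cases hxs : x ∈ s <;> simp [hx, hxs]
  simpa only [hL] using (L.integral_comp_comm hv).symm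

end BochnerLemmas

section Translation

variable {G F : Type*} [AddGroup G] [MeasurableSpace G] [MeasurableAdd G] {μ : Measure G}
  [μ.IsAddRightInvariant] [NormedAddCommGroup F] {p : ℝ≥0∞}

/-- The translate `x ↦ g (x - y)` of an `Lᵖ` function `g`. -/
noncomputable def translateLp (y : G) (g : Lp F p μ) : Lp F p μ :=
  Lp.compMeasurePreserving (· - y) (measurePreserving_sub_right μ y) g

theorem translateLp_zero (g : Lp F p μ) : translateLp 0 g = g := by
  simp only [translateLp, sub_zero]
  exact Lp.compMeasurePreserving_id_apply g

theorem translateLp_toLp_ae_eq {g : G → F} (hg : MemLp g p μ) (y : G) :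
    translateLp y (hg.toLp g) =ᵐ[μ] fun x ↦ g (x - y) :=
  MemLp.coeFn_toLp (hg.comp_measurePreserving (measurePreserving_sub_right μ y))

theorem norm_translateLp (y : G) (g : Lp F p μ) : ‖translateLp y g‖ = ‖g‖ :=
  Lp.norm_compMeasurePreserving _ _

variable [TopologicalSpace G] [IsTopologicalAddGroup G] [R1Space G] [BorelSpace G]
  [IsLocallyFiniteMeasure μ] [μ.InnerRegularCompactLTTop] [Fact (1 ≤ p)]

theorem continuous_translateLp (hp : p ≠ ∞) (g : Lp F p μ) :
    Continuous fun y ↦ translateLp y g :=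
  let subRight : C(G, C(G, G)) := ContinuousMap.curry ⟨fun a : G × G ↦ a.2 - a.1, by fun_prop⟩
  continuous_const.compMeasurePreservingLp subRight.continuous _ hp

variable [SecondCountableTopology G] [NormedSpace ℝ F]

theorem integrable_smul_translateLp (hp : p ≠ ∞) {f : G → ℝ} (hf : Integrable f μ)
    (g : Lp F p μ) : Integrable (fun y ↦ f y • translateLp y g) μ :=
  hf.smul_bdd ‖g‖ (continuous_translateLp hp g).aestronglyMeasurable
    (ae_of_all _ fun y ↦ (norm_translateLp y g).le)

theorem integral_smul_translateLp_ae_eq_convolution [CompleteSpace F] [SFinite μ] (hp : p ≠ ∞)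
    {f : G → ℝ} {g : G → F} (hf : Integrable f μ) (hg : Integrable g μ) (hgp : MemLp g p μ) :
    (∫ y, f y • translateLp y (hgp.toLp g) ∂μ : Lp F p μ) =ᵐ[μ]
      f ⋆[ContinuousLinearMap.lsmul ℝ ℝ, μ] g := by
  have hp_zero : p ≠ 0 := (zero_lt_one.trans_le Fact.out).ne'
  have hfg : Integrable (f ⋆[ContinuousLinearMap.lsmul ℝ ℝ, μ] g) μ :=
    hf.integrable_convolution _ hg
  refine AEFinStronglyMeasurable.ae_eq_of_forall_setIntegral_eq
    (fun s _ hμs ↦ integrableOn_Lp_of_measure_ne_top _ Fact.out hμs.ne)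
    (fun s _ _ ↦ hfg.integrableOn) (fun s hs hμs ↦ ?_)
    (Lp.finStronglyMeasurable _ hp_zero hp).aefinStronglyMeasurable hfg.aefinStronglyMeasurable
  have hintegrand : Integrable (fun a : G × G ↦ f a.2 • g (a.1 - a.2)) ((μ.restrict s).prod μ) :=
    (hf.convolution_integrand (ContinuousLinearMap.lsmul ℝ ℝ) hg).mono_measure
      (Measure.prod_mono Measure.restrict_le_self le_rfl)
  calc ∫ x in s, (∫ y, f y • translateLp y (hgp.toLp g) ∂μ : Lp F p μ) x ∂μ
    _ = ∫ y, ∫ x in s, (f y • translateLp y (hgp.toLp g) : Lp F p μ) x ∂μ ∂μ :=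
      setIntegral_integral_Lp (integrable_smul_translateLp hp hf _) hs hμs.ne
    _ = ∫ y, ∫ x in s, f y • g (x - y) ∂μ ∂μ := by
      congr! 2 with y
      refine integral_congr_ae (ae_restrict_of_ae ?_)
      filter_upwards [Lp.coeFn_smul (f y) (translateLp y (hgp.toLp g)),
        translateLp_toLp_ae_eq hgp y] with x hsmul htranslate
      rw [hsmul, Pi.smul_apply, htranslate]
    _ = ∫ x in s, ∫ y, f y • g (x - y) ∂μ ∂μ := (integral_integral_swap hintegrand).symm
    _ = ∫ x in s, (f ⋆[ContinuousLinearMap.lsmul ℝ ℝ, μ] g) x ∂μ := rfl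

end Translation

theorem integral_smul_translateLp_comm {G : Type*} [AddCommGroup G] [TopologicalSpace G]
    [IsTopologicalAddGroup G] [R1Space G] [SecondCountableTopology G] [MeasurableSpace G]
    [BorelSpace G] {μ : Measure G} [μ.IsAddLeftInvariant] [μ.IsNegInvariant]
    [IsLocallyFiniteMeasure μ] [μ.InnerRegularCompactLTTop] [SFinite μ] {p : ℝ≥0∞} [Fact (1 ≤ p)]
    (hp : p ≠ ∞) {f g : G → ℝ} (hf : Integrable f μ) (hfp : MemLp f p μ) (hg : Integrable g μ)
    (hgp : MemLp g p μ) :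
    ∫ y, f y • translateLp y (hgp.toLp g) ∂μ = ∫ y, g y • translateLp y (hfp.toLp f) ∂μ := by
  have hcomm : f ⋆[ContinuousLinearMap.lsmul ℝ ℝ, μ] g =
      g ⋆[ContinuousLinearMap.lsmul ℝ ℝ, μ] f := by
    ext x
    simp only [convolution_lsmul, convolution_lsmul_swap (f := g), smul_eq_mul, mul_comm]
  refine Lp.ext ((integral_smul_translateLp_ae_eq_convolution hp hf hg hgp).trans ?_)
  rw [hcomm]
  exact (integral_smul_translateLp_ae_eq_convolution hp hg hf hfp).symm

section Dilation

variable {E F : Type*} [NormedAddCommGroup E] [NormedSpace ℝ E]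

/-- The rescaled kernel `φ_σ(w) = σ⁻ᵈ φ(w / σ)`, where `d` is the dimension of the space. -/
noncomputable def dilate (φ : E → ℝ) (σ : ℝ) (w : E) : ℝ :=
  (σ ^ finrank ℝ E)⁻¹ * φ (σ⁻¹ • w)

variable [FiniteDimensional ℝ E] [MeasurableSpace E] [BorelSpace E] {μ : Measure E}
  [μ.IsAddHaarMeasure] {φ : E → ℝ} {σ : ℝ}

theorem memLp_dilate {p : ℝ≥0∞} (hφ : MemLp φ p μ) (hσ : 0 < σ) : MemLp (dilate φ σ) p μ := by
  refine MemLp.const_mul (MemLp.comp_of_map ?_ (by fun_prop)) _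
  rw [Measure.map_addHaar_smul μ (inv_ne_zero hσ.ne')]
  exact hφ.smul_measure ENNReal.ofReal_ne_top

variable [NormedAddCommGroup F] [NormedSpace ℝ F]

theorem integral_dilate_smul (hσ : 0 < σ) (v : E → F) :
    ∫ u, dilate φ σ u • v u ∂μ = ∫ x, φ x • v (σ • x) ∂μ := by
  have h := Measure.integral_comp_inv_smul_of_nonneg μ (fun x ↦ φ x • v (σ • x)) hσ.le
  simp only [smul_inv_smul₀ hσ.ne'] at h
  simp only [dilate, mul_smul, integral_smul, h]
  rw [inv_smul_smul₀ (pow_pos hσ _).ne']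

theorem tendsto_integral_dilate_smul [CompleteSpace F] (hφ : Integrable φ μ) {v : E → F}
    (hv : Continuous v) {C : ℝ} (hvC : ∀ u, ‖v u‖ ≤ C) :
    Tendsto (fun σ ↦ ∫ u, dilate φ σ u • v u ∂μ) (𝓝[>] 0) (𝓝 ((∫ x, φ x ∂μ) • v 0)) := by
  have hlim : Tendsto (fun σ : ℝ ↦ ∫ x, φ x • v (σ • x) ∂μ) (𝓝[>] 0)
      (𝓝 (∫ x, φ x • v 0 ∂μ)) := by
    refine tendsto_integral_filter_of_dominated_convergence (fun x ↦ ‖φ x‖ * C)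
      (.of_forall fun σ ↦ ?_) (.of_forall fun σ ↦ ae_of_all _ fun x ↦ ?_)
      (hφ.norm.mul_const C) (ae_of_all _ fun x ↦ ?_)
    · have hcont : Continuous fun x ↦ v (σ • x) := by fun_prop
      exact hφ.aestronglyMeasurable.smul hcont.aestronglyMeasurable
    · rw [norm_smul]
      gcongr
      exact hvC _
    · have hcont : Continuous fun σ : ℝ ↦ φ x • v (σ • x) := by fun_prop
      simpa using (hcont.tendsto 0).mono_left nhdsWithin_le_nhds
  rw [integral_smul_const] at hlim
  refine hlim.congr' ?_
  filter_upwards [self_mem_nhdsWithin] with σ hσ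
  exact (integral_dilate_smul hσ v).symm

theorem tendsto_integral_dilate_smul_translateLp [CompleteSpace F] {p : ℝ≥0∞} [Fact (1 ≤ p)]
    (hp : p ≠ ∞) (hφ : Integrable φ μ) (hφ_int : ∫ x, φ x ∂μ = 1) (g : Lp F p μ) :
    Tendsto (fun σ ↦ ∫ u, dilate φ σ u • translateLp u g ∂μ) (𝓝[>] 0) (𝓝 g) := by
  have h := tendsto_integral_dilate_smul hφ (continuous_translateLp hp g)
    fun u ↦ (norm_translateLp u g).le
  rwa [hφ_int, one_smul, translateLp_zero] at h

end Dilation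

section Mixture

variable {d : ℕ} {φ : EuclideanSpace ℝ (Fin d) → ℝ}

theorem isMixtureDensity_sum_dilate {ι : Type*} [Fintype ι] {α : ι → ℝ}
    (hα : ∀ i, 0 ≤ α i) (hα_sum : ∑ i, α i = 1) (c : ι → EuclideanSpace ℝ (Fin d)) {σ : ι → ℝ}
    (hσ : ∀ i, 0 < σ i ∧ σ i ≤ 1) :
    IsMixtureDensity φ fun w ↦ ∑ i, α i * dilate φ (σ i) (w - c i) := by
  have hι : Nonempty ι := by
    by_contra h
    rw [not_nonempty_iff] at h
    simp at hα_sum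
  let e := (Fintype.equivFin ι).symm
  refine ⟨Fintype.card ι, Fintype.card_pos, α ∘ e, c ∘ e, σ ∘ e, fun i ↦ hα _, ?_,
    fun i ↦ hσ _, fun w ↦ ?_⟩
  · rw [← hα_sum]
    exact e.sum_comp α
  · simp only [dilate, finrank_euclideanSpace_fin, Function.comp_apply]
    exact (e.sum_comp fun i ↦ α i * ((σ i ^ d)⁻¹ * φ ((σ i)⁻¹ • (w - c i)))).symm

theorem isMixtureDensity_dilate {σ : ℝ} (hσ : 0 < σ) (hσ_le : σ ≤ 1)
    (c : EuclideanSpace ℝ (Fin d)) : IsMixtureDensity φ fun w ↦ dilate φ σ (w - c) := by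
  simpa using isMixtureDensity_sum_dilate (ι := Unit) (α := fun _ ↦ 1) (fun _ ↦ zero_le_one)
    (by simp) (fun _ ↦ c) (fun _ ↦ ⟨hσ, hσ_le⟩)

theorem convex_setOf_isMixtureDensity : Convex ℝ {ρ | IsMixtureDensity φ ρ} := by
  rintro ρ₁ ⟨n, -, α₁, c₁, σ₁, hα₁, hα₁_sum, hσ₁, hρ₁⟩ ρ₂
    ⟨m, -, α₂, c₂, σ₂, hα₂, hα₂_sum, hσ₂, hρ₂⟩ a b ha hb hab
  have hsum : a • ρ₁ + b • ρ₂ = fun w ↦ ∑ i, Sum.elim (a • α₁) (b • α₂) i *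
      dilate φ (Sum.elim σ₁ σ₂ i) (w - Sum.elim c₁ c₂ i) := by
    ext w
    simp [hρ₁, hρ₂, dilate, Finset.mul_sum, mul_assoc]
  rw [Set.mem_ofPred_eq, hsum]
  exact isMixtureDensity_sum_dilate
    (Sum.forall.2 ⟨fun i ↦ mul_nonneg ha (hα₁ i), fun i ↦ mul_nonneg hb (hα₂ i)⟩)
    (by simp [← Finset.mul_sum, hα₁_sum, hα₂_sum, hab]) _ (Sum.forall.2 ⟨hσ₁, hσ₂⟩)

/-- The mixture class `P_φ` as a set of elements of `Lᵖ(ℝᵈ)`, that is, up to null sets. -/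
def mixtureLp (φ : EuclideanSpace ℝ (Fin d) → ℝ) (p : ℝ≥0∞) :
    Set (Lp ℝ p (volume : Measure (EuclideanSpace ℝ (Fin d)))) :=
  {f | ∃ ρ, IsMixtureDensity φ ρ ∧ f =ᵐ[volume] ρ}

theorem convex_mixtureLp {p : ℝ≥0∞} : Convex ℝ (mixtureLp φ p) := by
  rintro f ⟨ρ₁, hρ₁, hf⟩ g ⟨ρ₂, hρ₂, hg⟩ a b ha hb hab
  refine ⟨a • ρ₁ + b • ρ₂, convex_setOf_isMixtureDensity hρ₁ hρ₂ ha hb hab, ?_⟩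
  grw [Lp.coeFn_add, Lp.coeFn_smul, Lp.coeFn_smul, hf, hg]

theorem translateLp_dilate_mem_mixtureLp {p : ℝ≥0∞} {σ : ℝ} (hσ : 0 < σ) (hσ_le : σ ≤ 1)
    (hφσ : MemLp (dilate φ σ) p volume) (y : EuclideanSpace ℝ (Fin d)) :
    translateLp y (hφσ.toLp _) ∈ mixtureLp φ p :=
  ⟨_, isMixtureDensity_dilate hσ hσ_le y, translateLp_toLp_ae_eq hφσ y⟩

theorem toLp_mem_closure_mixtureLp {p : ℝ≥0∞} [Fact (1 ≤ p)] (hp : p ≠ ∞) (hφ : MemLp φ p volume)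
    (hφ_int : ∫ w, φ w = 1) {ρ : EuclideanSpace ℝ (Fin d) → ℝ} (hρ : MemLp ρ p volume)
    (hρ_nonneg : 0 ≤ᵐ[volume] ρ) (hρ_int : ∫ w, ρ w = 1) :
    hρ.toLp ρ ∈ closure (mixtureLp φ p) := by
  have hφ_integrable : Integrable φ := integrable_of_integral_eq_one hφ_int
  have hρ_integrable : Integrable ρ := integrable_of_integral_eq_one hρ_int
  refine isClosed_closure.mem_of_tendsto
    (tendsto_integral_dilate_smul_translateLp hp hφ_integrable hφ_int (hρ.toLp ρ)) ?_
  filter_upwards [Ioc_mem_nhdsGT zero_lt_one] with σ ⟨hσ, hσ_le⟩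
  have hφσ : MemLp (dilate φ σ) p volume := memLp_dilate hφ hσ
  have hφσ_integrable : Integrable (dilate φ σ) :=
    memLp_one_iff_integrable.1 (memLp_dilate (memLp_one_iff_integrable.2 hφ_integrable) hσ)
  rw [integral_smul_translateLp_comm hp hφσ_integrable hφσ hρ_integrable hρ]
  have hconv : Convex ℝ (closure (mixtureLp φ p)) := convex_mixtureLp.closure
  have hmem : ∀ y, translateLp y (hφσ.toLp _) ∈ closure (mixtureLp φ p) := fun y ↦
    subset_closure (translateLp_dilate_mem_mixtureLp hσ hσ_le hφσ y)
  have hint : Integrable fun y ↦ ρ y • translateLp y (hφσ.toLp _) :=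
    integrable_smul_translateLp hp hρ_integrable _
  exact integral_smul_mem_of_convex hconv isClosed_closure hρ_nonneg hρ_int hmem hint

end Mixture

theorem rpow_integral_sq_lt_of_eLpNorm_lt {α : Type*} {mα : MeasurableSpace α} {μ : Measure α}
    {f : α → ℝ} {ε : ℝ} (hf : eLpNorm f 2 μ < ENNReal.ofReal ε) :
    (∫ x, f x ^ 2 ∂μ) ^ ((1 : ℝ) / 2) < ε := by
  have hε : 0 < ε := ENNReal.ofReal_pos.1 (bot_le.trans_lt hf)
  rw [← Real.sqrt_eq_rpow, Real.sqrt_lt' hε, ← ENNReal.ofReal_lt_ofReal_iff (by positivity),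
    ENNReal.ofReal_pow hε.le]
  calc ENNReal.ofReal (∫ x, f x ^ 2 ∂μ)
    _ ≤ ∫⁻ x, ‖f x ^ 2‖ₑ ∂μ :=
      (Real.ofReal_le_enorm _).trans (enorm_integral_le_lintegral_enorm _)
    _ = eLpNorm f 2 μ ^ 2 := by
      have h := eLpNorm_nnreal_pow_eq_lintegral (μ := μ) (f := f) (two_ne_zero (α := NNReal))
      simpa [enorm_pow] using h.symm
    _ < ENNReal.ofReal ε ^ 2 := by gcongr

theorem mixture_dense_in_densities_general {d : ℕ} {p : ℝ≥0∞} (hp_one : 1 ≤ p) (hp : p ≠ ∞)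
    {φ : EuclideanSpace ℝ (Fin d) → ℝ} (hφ : MemLp φ p volume) (hφ_int : ∫ w, φ w = 1)
    {ρ : EuclideanSpace ℝ (Fin d) → ℝ} (hρ : MemLp ρ p volume) (hρ_nonneg : 0 ≤ᵐ[volume] ρ)
    (hρ_int : ∫ w, ρ w = 1) {ε : ℝ≥0∞} (hε : ε ≠ 0) :
    ∃ ρε, IsMixtureDensity φ ρε ∧ eLpNorm (ρε - ρ) p volume < ε := by
  have : Fact (1 ≤ p) := ⟨hp_one⟩
  obtain ⟨f, ⟨ρε, hmix, hfρε⟩, hdist⟩ := EMetric.mem_closure_iff.1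
    (toLp_mem_closure_mixtureLp hp hφ hφ_int hρ hρ_nonneg hρ_int) ε (pos_iff_ne_zero.2 hε)
  refine ⟨ρε, hmix, ?_⟩
  rwa [edist_comm, Lp.edist_def, eLpNorm_congr_ae (hfρε.sub hρ.coeFn_toLp)] at hdist

/-- Every uniformly continuous probability density supported in the
compact set `W` can be approximated in `L²(ℝ^d)` by a mixture density from `P_φ`. -/
theorem mixture_dense_in_densities
    (d : ℕ) (W : Set (EuclideanSpace ℝ (Fin d))) (hW : IsCompact W)
    (φ : EuclideanSpace ℝ (Fin d) → ℝ)
    (hφ_cont : Continuous φ) (hφ_supp : HasCompactSupport φ)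
    (hφ_nonneg : ∀ w, 0 ≤ φ w) (hφ_int : (∫ w, φ w) = 1)
    (β η : ℝ) (hβ : 0 < β) (hη : 0 < η)
    (hφ_decay : ∀ w, φ w ≤ β * (1 + ‖w‖) ^ (-(d : ℝ) - η))
    (ρ : EuclideanSpace ℝ (Fin d) → ℝ)
    (hρ_uc : UniformContinuous ρ) (hρ_nonneg : ∀ w, 0 ≤ ρ w)
    (hρ_int : (∫ w, ρ w) = 1) (hρ_supp : ∀ w ∉ W, ρ w = 0) :
    ∀ ε > (0 : ℝ), ∃ ρε : EuclideanSpace ℝ (Fin d) → ℝ,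
      IsMixtureDensity φ ρε ∧
      (∫ w, (ρε w - ρ w) ^ 2) ^ ((1 : ℝ) / 2) < ε := by
  intro ε hε
  have hφ : MemLp φ 2 := hφ_cont.memLp_of_hasCompactSupport hφ_supp
  have hρ : MemLp ρ 2 :=
    hρ_uc.continuous.memLp_of_hasCompactSupport (HasCompactSupport.intro hW hρ_supp)
  obtain ⟨ρε, hmix, hdist⟩ := mixture_dense_in_densities_general one_le_two ENNReal.ofNat_ne_top
    hφ hφ_int hρ (ae_of_all _ hρ_nonneg) hρ_int (ENNReal.ofReal_pos.2 hε).ne'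
  exact ⟨ρε, hmix, rpow_integral_sq_lt_of_eLpNorm_lt hdist⟩
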